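/- (Corollary: ℓ∞ recovery for random Gaussian networks.) There exist absolute constants c₂ ∈ (0,2], c > 0 and C > 0 with the following property. Let d ≥ 1, n₀ = k, and n_i ≥ 5·n_{i−1} for i = 1,…,d; let W₁,…,W_d be independent random matrices where W_i ∈ ℝ^{n_i × n_{i−1}} has i.i.d. standard Gaussian entries, and let G(z) = ReLU(W_d ⋯ ReLU(W₁ z) ⋯ ). Fix z* ∈ ℝ^k, let e satisfy ‖e‖_∞ = ε with ε < (c₂^d / 2^{d+4})·‖z*‖₂·√k, and set x = G(z*) + e. Define z₀* = z*, z_i* = ReLU(W_i z_{i−1}*) and ε_i = (2/c₂)^{d−i}·ε. Then with probability at least 1 − C·exp(−c·k) over the weights, every chain ẑ_d = x, ẑ_{d−1}, …, ẑ₀ in which each ẑ_{i−1} is ε_i-feasible for (W_i, ẑ_i) satisfies ‖ẑ₀ − z*‖_∞ ≤ (2/c₂)^d · ε, and at least one such chain exists. -/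

import Mathlib

open MeasureTheory ProbabilityTheory

/-- ReLU applied to a real number. -/
noncomputable def relu (t : ℝ) : ℝ := max t 0

/-- The law of a random `n × k` matrix (viewed as `Fin n → Fin k → ℝ`) with i.i.d.
standard Gaussian entries: the product over all entries of `N(0,1)`. -/
noncomputable def stdGaussianMatrix (n k : ℕ) : Measure (Fin n → Fin k → ℝ) :=
  Measure.pi fun _ : Fin n => Measure.pi fun _ : Fin k => gaussianReal 0 1

/-- The joint law of `d` independent Gaussian weight matrices, where the `i`-th matrix
has shape `n (i+1) × n i`. -/
noncomputable def netGaussian (d : ℕ) (n : ℕ → ℕ) :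
    Measure (∀ i : Fin d, Fin (n (i.1 + 1)) → Fin (n i.1) → ℝ) :=
  Measure.pi fun i : Fin d => stdGaussianMatrix (n (i.1 + 1)) (n i.1)

/-- Extend a `Fin d`-indexed family of weight matrices to an `ℕ`-indexed family
(by zero beyond `d`). -/
noncomputable def extendW (d : ℕ) (n : ℕ → ℕ)
    (W' : ∀ i : Fin d, Fin (n (i.1 + 1)) → Fin (n i.1) → ℝ) :
    ∀ i : ℕ, Fin (n (i + 1)) → Fin (n i) → ℝ :=
  fun i => if h : i < d then W' ⟨i, h⟩ else 0

/-- The output of the first `j` ReLU layers of the network with weights `W` on input `z`. -/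
noncomputable def layerOut (n : ℕ → ℕ) (W : ∀ i : ℕ, Fin (n (i + 1)) → Fin (n i) → ℝ) :
    (j : ℕ) → (Fin (n 0) → ℝ) → Fin (n j) → ℝ
  | 0, z => z
  | j + 1, z => fun i => relu ((Matrix.of (W j)).mulVec (layerOut n W j z) i)

/-- `z` is `δ`-feasible for `(W, y)`: `|w_j·z − y_j| ≤ δ` for every `j` with `y_j > δ`,
and `w_j·z ≤ y_j + δ` for every `j` with `y_j ≤ δ`. -/
def InfFeasible {n k : ℕ} (W : Matrix (Fin n) (Fin k) ℝ) (y : Fin n → ℝ) (δ : ℝ)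
    (z : Fin k → ℝ) : Prop :=
  ∀ j, (δ < y j → |W.mulVec z j - y j| ≤ δ) ∧ (y j ≤ δ → W.mulVec z j ≤ y j + δ)


/-- std gaussian vector -/
noncomputable def gpi (k : ℕ) : Measure (Fin k → ℝ) := Measure.pi fun _ : Fin k => gaussianReal 0 1

instance (k : ℕ) : IsProbabilityMeasure (gpi k) := by unfold gpi; infer_instance

lemma gpi_law (k : ℕ) (v : Fin k → ℝ) :
    (gpi k).map (fun w => w ⬝ᵥ v) =
      (gaussianReal 0 1).map (fun x => Real.sqrt (∑ j, v j ^ 2) * x) := by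
  have h1 : (fun w : Fin k → ℝ => w ⬝ᵥ v) =
      (fun y : EuclideanSpace ℝ (Fin k) => (innerSL ℝ (WithLp.toLp 2 v)) y) ∘ (WithLp.toLp 2) := by
    ext w
    simp [PiLp.inner_apply, dotProduct]
  rw [h1, ← Measure.map_map (by fun_prop) (by fun_prop)]
  have := map_pi_eq_stdGaussian (ι := Fin k)
  unfold gpi
  rw [this]
  rw [IsGaussian.map_eq_gaussianReal, integral_strongDual_stdGaussian, variance_dual_stdGaussian,
    gaussianReal_map_const_mul]
  congr 1
  · simp
  · rw [innerSL_apply_norm, EuclideanSpace.norm_eq]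
    ext
    simp [Real.sq_sqrt, Finset.sum_nonneg, sq_nonneg]

lemma gpi_apply (k : ℕ) (v : Fin k → ℝ) {A : Set ℝ} (hA : MeasurableSet A) :
    (gpi k) {w | w ⬝ᵥ v ∈ A} = gaussianReal 0 1 {x | Real.sqrt (∑ j, v j ^ 2) * x ∈ A} := by
  have := congrArg (fun m => m A) (gpi_law k v)
  rwa [Measure.map_apply (by unfold dotProduct; fun_prop) hA, Measure.map_apply (by fun_prop) hA] at this

lemma g_vol (A : Set ℝ) : gaussianReal 0 1 A ≤ volume A := by
  rw [gaussianReal_apply _ one_ne_zero]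
  calc _ ≤ ∫⁻ x in A, 1 := by
        apply lintegral_mono
        intro x
        rw [gaussianPDF_def, gaussianPDFReal_def]
        simp only [NNReal.coe_one, mul_one, sub_zero]
        rw [← ENNReal.ofReal_one]
        apply ENNReal.ofReal_le_ofReal
        have h1 : (√(2 * Real.pi))⁻¹ ≤ 1 := by
          apply inv_le_one_of_one_le₀
          rw [Real.one_le_sqrt]
          nlinarith [Real.pi_gt_three]
        have h2 : Real.exp (-x ^ 2 / 2) ≤ 1 := by
          rw [Real.exp_le_one_iff]; nlinarith [sq_nonneg x]
        have := Real.exp_pos (-x ^ 2 / 2)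
        have h3 : 0 ≤ (√(2 * Real.pi))⁻¹ := by positivity
        nlinarith
    _ = _ := by simp

lemma g_neg (A : Set ℝ) (hA : MeasurableSet A) :
    gaussianReal 0 1 {x | -x ∈ A} = gaussianReal 0 1 A := by
  have := gaussianReal_map_neg (μ := 0) (v := 1)
  have h2 := congrArg (fun m => m A) this
  simp only [neg_zero] at h2
  rwa [Measure.map_apply (by fun_prop) hA] at h2

lemma g_pos : gaussianReal 0 1 (Set.Ioi 0) ≤ ENNReal.ofReal (1/2) := by
  have h1 := g_neg (Set.Ioi 0) measurableSet_Ioi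
  have h2 : {x : ℝ | -x ∈ Set.Ioi 0} = Set.Iio 0 := by ext; simp
  rw [h2] at h1
  have h3 : gaussianReal 0 1 (Set.Iio 0) + gaussianReal 0 1 (Set.Ioi 0) ≤ 1 := by
    rw [← measure_union _ measurableSet_Ioi]
    · exact prob_le_one
    · rw [Set.disjoint_left]; intro x hx hx'; simp at *; linarith
  rw [h1] at h3
  have ht : gaussianReal 0 1 (Set.Ioi (0:ℝ)) ≠ ⊤ := measure_ne_top _ _
  lift gaussianReal 0 1 (Set.Ioi (0:ℝ)) to NNReal using ht with a
  rw [← ENNReal.ofReal_coe_nnreal]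
  apply ENNReal.ofReal_le_ofReal
  have : (a:ℝ) + a ≤ 1 := by exact_mod_cast h3
  linarith

lemma g_abs (t : ℝ) : gaussianReal 0 1 {x | |x| ≤ t} ≤ ENNReal.ofReal (2 * t) := by
  refine (g_vol _).trans ?_
  have : {x : ℝ | |x| ≤ t} = Set.Icc (-t) t := by ext; simp [abs_le]
  rw [this, Real.volume_Icc]
  apply ENNReal.ofReal_le_ofReal; linarith

lemma g_le (t : ℝ) (ht : 0 ≤ t) : gaussianReal 0 1 {x | x ≤ t} ≤ ENNReal.ofReal (1/2 + t) := by
  have h1 := g_neg (Set.Ioi 0) measurableSet_Ioi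
  have h2 : {x : ℝ | -x ∈ Set.Ioi 0} = Set.Iio 0 := by ext; simp
  rw [h2] at h1
  have h3 : {x : ℝ | x ≤ t} ⊆ Set.Iio 0 ∪ Set.Icc 0 t := by
    intro x hx
    rcases lt_or_ge x 0 with h | h
    · left; exact h
    · right; exact ⟨h, hx⟩
  refine (measure_mono h3).trans ((measure_union_le _ _).trans ?_)
  rw [ENNReal.ofReal_add (by norm_num) ht, h1]
  gcongr
  · exact g_pos
  · refine (g_vol _).trans ?_
    rw [Real.volume_Icc]; simp

lemma g_tail : gaussianReal 0 1 {x | x < -20} ≤ ENNReal.ofReal (1/400) := by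
  have := meas_ge_le_variance_div_sq (μ := gaussianReal 0 1) (X := id) (memLp_id_gaussianReal 2) (c := 20) (by norm_num)
  rw [variance_id_gaussianReal] at this
  simp only [id_eq, integral_id_gaussianReal] at this
  refine (measure_mono ?_).trans (this.trans ?_)
  · intro x hx
    simp only [Set.mem_ofPred_eq] at *
    rw [sub_zero, abs_of_neg (by linarith)]; linarith
  · apply ENNReal.ofReal_le_ofReal; norm_num


/-- sign of a Bool -/
def bsgn (s : Bool) : ℝ := if s then 1 else -1

lemma bsgn_sq (s : Bool) : bsgn s * bsgn s = 1 := by cases s <;> simp [bsgn]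

lemma vertex_exists {J : Type} [Fintype J] [DecidableEq J] {k : ℕ} (a : J → Fin k → ℝ) (b : J → ℝ)
    (act : J → Bool → Prop) (u0 : Fin k → ℝ)
    (h0 : ∀ x s, act x s → bsgn s * (a x ⬝ᵥ u0) ≤ b x) (r : ℝ)
    (hb : ∀ u : Fin k → ℝ, (∀ x s, act x s → bsgn s * (a x ⬝ᵥ u) ≤ b x) → ‖u‖ ≤ r)
    (x0 : J) (s0 : Bool) (ha0 : act x0 s0) (ht0 : bsgn s0 * (a x0 ⬝ᵥ u0) = b x0) :
    ∃ u : Fin k → ℝ, (∀ x s, act x s → bsgn s * (a x ⬝ᵥ u) ≤ b x) ∧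
      bsgn s0 * (a x0 ⬝ᵥ u) = b x0 ∧
      ∃ (D : Finset J) (s : J → Bool), D.card = k ∧
        (∀ x ∈ D, act x (s x) ∧ bsgn (s x) * (a x ⬝ᵥ u) = b x) ∧
        ∀ v : Fin k → ℝ, (∀ x ∈ D, a x ⬝ᵥ v = 0) → v = 0 := by
  classical
  have hcont : ∀ x s, Continuous (fun u : Fin k → ℝ => bsgn s * (a x ⬝ᵥ u)) := by
    intro x s; unfold dotProduct; fun_prop
  let F : Set (Fin k → ℝ) := {u | (∀ x s, act x s → bsgn s * (a x ⬝ᵥ u) ≤ b x) ∧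
      bsgn s0 * (a x0 ⬝ᵥ u) = b x0}
  have hFc : IsCompact F := by
    apply Metric.isCompact_of_isClosed_isBounded
    · have : F = (⋂ x, ⋂ s, ⋂ (_ : act x s), {u | bsgn s * (a x ⬝ᵥ u) ≤ b x}) ∩
          {u | bsgn s0 * (a x0 ⬝ᵥ u) = b x0} := by
        ext u; simp [F]
      rw [this]
      apply IsClosed.inter
      · exact isClosed_iInter fun x => isClosed_iInter fun s => isClosed_iInter fun _ =>
          isClosed_le (hcont x s) continuous_const
      · exact isClosed_eq (hcont x0 s0) continuous_const
    · exact (Metric.isBounded_closedBall (x := (0 : Fin k → ℝ)) (r := r)).subset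
        (fun u hu => by simpa using hb u hu.1)
  obtain ⟨u, hu⟩ := hFc.extremePoints_nonempty ⟨u0, h0, ht0⟩
  have huF : u ∈ F := hu.1
  -- tight set
  let T : Set J := {x | ∃ s, act x s ∧ bsgn s * (a x ⬝ᵥ u) = b x}
  have hT : ∀ v : Fin k → ℝ, (∀ x ∈ T, a x ⬝ᵥ v = 0) → v = 0 := by
    intro v hv
    have key : ∀ᶠ t in nhds (0:ℝ), ∀ x s, act x s → bsgn s * (a x ⬝ᵥ (u + t • v)) ≤ b x := by
      rw [Filter.eventually_all]; intro x
      rw [Filter.eventually_all]; intro s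
      by_cases hact : act x s
      · rcases (huF.1 x s hact).lt_or_eq with hlt | heq
        · have hc : Continuous (fun t : ℝ => bsgn s * (a x ⬝ᵥ (u + t • v))) :=
            (hcont x s).comp (by fun_prop)
          have : Filter.Tendsto (fun t : ℝ => bsgn s * (a x ⬝ᵥ (u + t • v))) (nhds 0)
              (nhds (bsgn s * (a x ⬝ᵥ u))) := by
            have := hc.tendsto 0
            simpa using this
          filter_upwards [this.eventually_lt_const hlt] with t ht _ using ht.le
        · refine Filter.Eventually.of_forall fun t _ => ?_
          rw [dotProduct_add, dotProduct_smul, hv x ⟨s, hact, heq⟩]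
          simp [heq]
      · exact Filter.Eventually.of_forall fun t h => absurd h hact
    obtain ⟨e, he, hball⟩ := Metric.eventually_nhds_iff.1 key
    have hp : ∀ t : ℝ, |t| < e → u + t • v ∈ F := by
      intro t ht
      refine ⟨hball (by simpa using ht), ?_⟩
      rw [dotProduct_add, dotProduct_smul, hv x0 ⟨s0, ha0, huF.2⟩]
      simpa using huF.2
    have h1 := hp (e/2) (by rw [abs_of_pos (by linarith)]; linarith)
    have h2 := hp (-(e/2)) (by rw [abs_neg, abs_of_pos (by linarith)]; linarith)
    have := hu.2 h1 h2 ⟨1/2, 1/2, by norm_num, by norm_num, by norm_num, by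
      ext i; simp; ring⟩
    have h3 : (e/2) • v = 0 := by simpa using this
    rcases smul_eq_zero.1 h3 with h | h
    · linarith
    · exact h
  have hspan : Submodule.span ℝ (Set.range (fun x : T => a x)) = ⊤ := by
    by_contra hne
    obtain ⟨f, hf0, hf⟩ := Submodule.exists_le_ker_of_lt_top _ (lt_top_iff_ne_top.2 hne)
    let v : Fin k → ℝ := fun i => f (Pi.single i 1)
    have hfv : ∀ w, f w = w ⬝ᵥ v := by
      intro w
      rw [LinearMap.pi_apply_eq_sum_univ f w]
      simp only [dotProduct, v, smul_eq_mul]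
      refine Finset.sum_congr rfl fun x _ => ?_
      congr 2
      ext j
      simp [Pi.single_apply, eq_comm]
    have : v = 0 := hT v (fun x hx => by
      rw [← hfv]
      exact hf (Submodule.subset_span ⟨⟨x, hx⟩, rfl⟩))
    apply hf0
    ext i
    simp [hfv, this]
  obtain ⟨κ, g, hg, hsp, hli⟩ := exists_linearIndependent' ℝ (fun x : T => a x)
  have : Finite κ := Finite.of_injective g hg
  have : Fintype κ := Fintype.ofFinite κ
  rw [hspan] at hsp
  have hcard : Fintype.card κ = k := by
    have := Module.finrank_eq_card_basis (Module.Basis.mk hli hsp.ge)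
    simpa using this.symm
  have hs : ∀ x, ∃ s, x ∈ T → act x s ∧ bsgn s * (a x ⬝ᵥ u) = b x := by
    intro x
    by_cases hx : x ∈ T
    · obtain ⟨s, hs⟩ := hx; exact ⟨s, fun _ => hs⟩
    · exact ⟨true, fun h => absurd h hx⟩
  choose s hs using hs
  refine ⟨u, huF.1, huF.2, Finset.univ.image (fun i => (g i : J)), s, ?_, ?_, ?_⟩
  · rw [Finset.card_image_of_injective Finset.univ (f := fun i => (g i : J))
      (Subtype.val_injective.comp hg), Finset.card_univ, hcard]
  · intro x hx
    simp only [Finset.mem_image, Finset.mem_univ, true_and] at hx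
    obtain ⟨i, rfl⟩ := hx
    exact hs _ (g i).2
  · intro v hv
    have : ∀ w ∈ Submodule.span ℝ (Set.range ((fun x : T => a x) ∘ g)), w ⬝ᵥ v = 0 := by
      intro w hw
      induction hw using Submodule.span_induction with
      | mem x hx => obtain ⟨i, rfl⟩ := hx; exact hv _ (by simp)
      | zero => simp
      | add x y _ _ hx hy => rw [add_dotProduct, hx, hy, add_zero]
      | smul c x _ hx => rw [smul_dotProduct, hx, smul_zero]
    rw [hsp] at this
    exact dotProduct_self_eq_zero.1 (this v trivial)


lemma fubini_box {n : ℕ} {X : Type} [MeasurableSpace X] (μ : Measure X) [IsProbabilityMeasure μ]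
    (B : Finset (Fin n)) (A : Fin n → Set X) (hA : ∀ j, MeasurableSet (A j))
    (G : Set (Fin n → X)) (K : (Fin n → X) → Set X) (q : ENNReal)
    (hGdep : ∀ W W', (∀ j ∈ B, W j = W' j) → (W ∈ G ↔ W' ∈ G))
    (hKdep : ∀ W W', (∀ j ∈ B, W j = W' j) → K W = K W')
    (hK : ∀ W ∈ G, μ (K W) ≤ q)
    (hm : MeasurableSet {W : Fin n → X | (∀ j ∈ B, W j ∈ A j) ∧ W ∈ G ∧ ∀ j ∉ B, W j ∈ K W}) :
    (Measure.pi fun _ : Fin n => μ)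
      {W : Fin n → X | (∀ j ∈ B, W j ∈ A j) ∧ W ∈ G ∧ ∀ j ∉ B, W j ∈ K W} ≤
      (∏ j ∈ B, μ (A j)) * q ^ (Bᶜ.card) := by
  classical
  set E := {W : Fin n → X | (∀ j ∈ B, W j ∈ A j) ∧ W ∈ G ∧ ∀ j ∉ B, W j ∈ K W} with hE
  let R : Set (Fin n → X) := Set.univ.pi (fun j => if j ∈ B then A j else Set.univ)
  have hR : MeasurableSet R := MeasurableSet.univ_pi fun j => by
    split_ifs
    · exact hA j
    · exact MeasurableSet.univ
  have hRm : (Measure.pi fun _ : Fin n => μ) R = ∏ j ∈ B, μ (A j) := by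
    rw [Measure.pi_pi, ← Finset.prod_subset (Finset.subset_univ B)]
    · refine Finset.prod_congr rfl fun j hj => by simp [hj]
    · intro j _ hj; simp [hj]
  rw [← lintegral_indicator_one hm, ← hRm, mul_comm, ← lintegral_indicator_const hR]
  refine lintegral_le_of_lmarginal_le Bᶜ (measurable_one.indicator hm) (measurable_const.indicator hR) ?_
  intro x
  simp only [lmarginal]
  have hupd : ∀ y : (∀ i : ↥Bᶜ, X), ∀ j ∈ B, Function.updateFinset x Bᶜ y j = x j := by
    intro y j hj
    simp [Function.updateFinset, hj]
  have hupd2 : ∀ y : (∀ i : ↥Bᶜ, X), ∀ j (hj : j ∈ Bᶜ), Function.updateFinset x Bᶜ y j = y ⟨j, hj⟩ := by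
    intro y j hj
    rw [Function.updateFinset, dif_pos hj]
  by_cases hx : x ∈ R
  · have h2 : ∀ y, Function.updateFinset x Bᶜ y ∈ R := by
      intro y j _
      by_cases hj : j ∈ B
      · rw [hupd y j hj]; exact hx j trivial
      · simp [hj]
    simp only [Set.indicator_of_mem (h2 _), lintegral_const, measure_univ, mul_one]
    by_cases hg : x ∈ G
    · calc _ ≤ ∫⁻ y : (∀ i : ↥Bᶜ, X), (toMeasurable (Measure.pi fun _ : ↥Bᶜ => μ) (Set.univ.pi fun _ : ↥Bᶜ => K x)).indicator 1 y ∂(Measure.pi fun _ : ↥Bᶜ => μ) := by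
            apply lintegral_mono
            intro y
            beta_reduce
            by_cases hy : Function.updateFinset x Bᶜ y ∈ E
            · rw [Set.indicator_of_mem hy, Set.indicator_of_mem]
              · rfl
              apply subset_toMeasurable
              intro j _
              have := hy.2.2 j (Finset.mem_compl.1 j.2)
              rwa [hupd2 y j j.2, hKdep _ x (hupd y)] at this
            · rw [Set.indicator_of_notMem hy]; exact zero_le
        _ = ∏ _ : ↥Bᶜ, μ (K x) := by
            rw [lintegral_indicator_one (measurableSet_toMeasurable _ _), measure_toMeasurable,
              Measure.pi_pi]
        _ ≤ _ := by
            rw [Finset.prod_const, Finset.card_univ, Fintype.card_coe]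
            gcongr
            exact hK x hg
    · have : ∀ y, Function.updateFinset x Bᶜ y ∉ E := fun y hy =>
        hg ((hGdep _ x (hupd y)).1 hy.2.1)
      simp [Set.indicator_of_notMem (this _)]
  · have : ∀ y, Function.updateFinset x Bᶜ y ∉ E := by
      intro y hy
      apply hx
      intro j _
      by_cases hj : j ∈ B
      · simpa [hj, hupd y j hj] using hy.1 j hj
      · simp [hj]
    simp [Set.indicator_of_notMem (this _)]

/-- rows of the network layer together with the coordinate vectors -/
noncomputable def vecs {n k : ℕ} (W : Fin n → Fin k → ℝ) : Fin n ⊕ Fin k → Fin k → ℝ :=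
  Sum.elim W (fun i => Pi.single i 1)

noncomputable def Umat {n k : ℕ} (D : Finset (Fin n ⊕ Fin k)) (W : Fin n → Fin k → ℝ) :
    Matrix D (Fin k) ℝ := Matrix.of fun x => vecs W x

noncomputable def Usol {n k : ℕ} (D : Finset (Fin n ⊕ Fin k)) (b : D → ℝ)
    (W : Fin n → Fin k → ℝ) : Fin k → ℝ :=
  ((Umat D W).transpose * Umat D W)⁻¹.mulVec ((Umat D W).transpose.mulVec b)

lemma Usol_measurable {n k : ℕ} (D : Finset (Fin n ⊕ Fin k)) (b : D → ℝ) :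
    Measurable (Usol D b) := by
  have h0 : Continuous (fun W : Fin n → Fin k → ℝ => Umat D W) := by
    refine continuous_matrix fun x i => ?_
    rcases x with ⟨x | x, hx⟩
    · simp only [Umat, vecs, Matrix.of_apply, Sum.elim_inl]; fun_prop
    · simp only [Umat, vecs, Matrix.of_apply, Sum.elim_inr]; fun_prop
  have h1 : Continuous (fun W : Fin n → Fin k → ℝ => (Umat D W).transpose * Umat D W) :=
    h0.matrix_transpose.matrix_mul h0
  have h2 : Continuous (fun W : Fin n → Fin k → ℝ => ((Umat D W).transpose * Umat D W).adjugate.mulVec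
      ((Umat D W).transpose.mulVec b)) :=
    h1.matrix_adjugate.matrix_mulVec (h0.matrix_transpose.matrix_mulVec continuous_const)
  have h3 : Usol D b = fun W => (((Umat D W).transpose * Umat D W).det)⁻¹ •
      ((Umat D W).transpose * Umat D W).adjugate.mulVec ((Umat D W).transpose.mulVec b) := by
    ext1 W
    rw [Usol, Matrix.inv_def, Ring.inverse_eq_inv', Matrix.smul_mulVec]
  rw [h3]
  exact h1.matrix_det.measurable.inv.smul h2.measurable

lemma Usol_congr {n k : ℕ} (D : Finset (Fin n ⊕ Fin k)) (b : D → ℝ)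
    (W W' : Fin n → Fin k → ℝ) (h : ∀ j, Sum.inl j ∈ D → W j = W' j) : Usol D b W = Usol D b W' := by
  have : Umat D W = Umat D W' := by
    ext ⟨x, hx⟩ i
    rcases x with x | x
    · simp [Umat, vecs, h x hx]
    · simp [Umat, vecs]
  rw [Usol, Usol, this]

lemma Usol_eq {n k : ℕ} (D : Finset (Fin n ⊕ Fin k)) (b : D → ℝ)
    (W : Fin n → Fin k → ℝ) (u : Fin k → ℝ) (hu : ∀ x : D, vecs W x ⬝ᵥ u = b x)
    (hinj : ∀ v : Fin k → ℝ, (∀ x ∈ D, vecs W x ⬝ᵥ v = 0) → v = 0) : Usol D b W = u := by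
  have h1 : (Umat D W).mulVec u = b := by ext x; exact hu x
  have hunit : IsUnit ((Umat D W).transpose * Umat D W) := by
    rw [← Matrix.mulVec_injective_iff_isUnit]
    rw [← Matrix.coe_mulVecLin, ← LinearMap.ker_eq_bot, Matrix.ker_mulVecLin_transpose_mul_self,
      LinearMap.ker_eq_bot']
    intro v hv
    exact hinj v fun x hx => congrFun hv ⟨x, hx⟩
  rw [Usol, ← h1, Matrix.mulVec_mulVec, Matrix.mulVec_mulVec, Matrix.mul_assoc,
    Matrix.nonsing_inv_mul _ ((Matrix.isUnit_iff_isUnit_det _).1 hunit), Matrix.one_mulVec]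


/-- bound vector -/
noncomputable def bvec {n k : ℕ} (h r : ℝ) : Fin n ⊕ Fin k → ℝ := Sum.elim (fun _ => h) (fun _ => r)

/-- solution attached to a choice of tight constraints -/
noncomputable def Uv {n k : ℕ} (h r : ℝ) (D : Finset (Fin n ⊕ Fin k)) (s : D → Bool)
    (W : Fin n → Fin k → ℝ) : Fin k → ℝ := Usol D (fun x => bsgn (s x) * bvec h r x.1) W

/-- the event attached to a choice of tight constraints -/
def Ev {Z : Type} {n k : ℕ} (P : Bool → Set (Z × (Fin k → ℝ))) (h r : ℝ)
    (D : Finset (Fin n ⊕ Fin k)) (s : D → Bool) : Set (Z × (Fin n → Fin k → ℝ)) :=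
  {p | (∀ j (hj : Sum.inl j ∈ D), (p.1, p.2 j) ∈ P (s ⟨_, hj⟩)) ∧ ‖Uv h r D s p.2‖ = r ∧
    ∀ j, Sum.inl j ∉ D → ∀ t, (p.1, p.2 j) ∈ P t → bsgn t * (p.2 j ⬝ᵥ Uv h r D s p.2) ≤ h}

lemma Ev_meas {Z : Type} [MeasurableSpace Z] {n k : ℕ} (P : Bool → Set (Z × (Fin k → ℝ)))
    (hP : ∀ t, MeasurableSet (P t)) (h r : ℝ)
    (D : Finset (Fin n ⊕ Fin k)) (s : D → Bool) : MeasurableSet (Ev P h r D s) := by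
  have hU : Measurable (fun p : Z × (Fin n → Fin k → ℝ) => Uv h r D s p.2) :=
    (Usol_measurable D _).comp measurable_snd
  have hj : ∀ j, Measurable (fun p : Z × (Fin n → Fin k → ℝ) => (p.1, p.2 j)) := by
    intro j; fun_prop
  unfold Ev
  refine MeasurableSet.inter ?_ (MeasurableSet.inter ?_ ?_)
  · refine MeasurableSet.congr (s := ⋂ j, ⋂ (hj : Sum.inl j ∈ D),
      (fun p : Z × (Fin n → Fin k → ℝ) => (p.1, p.2 j)) ⁻¹' (P (s ⟨_, hj⟩))) ?_ ?_
    · exact MeasurableSet.iInter fun j => MeasurableSet.iInter fun _ => hj j (hP _)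
    · ext p; simp; exact Iff.rfl
  · exact measurableSet_eq_fun hU.norm measurable_const
  · refine MeasurableSet.congr (s := ⋂ j, ⋂ (_ : Sum.inl j ∉ D), ⋂ t,
      (((fun p : Z × (Fin n → Fin k → ℝ) => (p.1, p.2 j)) ⁻¹' (P t))ᶜ ∪
        {p | bsgn t * (p.2 j ⬝ᵥ Uv h r D s p.2) ≤ h})) ?_ ?_
    · refine MeasurableSet.iInter fun j => MeasurableSet.iInter fun _ =>
        MeasurableSet.iInter fun t => MeasurableSet.union (hj j (hP _)).compl ?_
      refine measurableSet_le ?_ measurable_const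
      unfold dotProduct
      refine measurable_const.mul (Finset.measurable_sum _ fun i _ => ?_)
      refine Measurable.mul (by fun_prop) ((measurable_pi_apply i).comp hU)
    · ext p; simp [imp_iff_not_or]; exact Iff.rfl

lemma Ev_bound {Z : Type} [MeasurableSpace Z] {n k : ℕ} (μ : Measure (Fin k → ℝ))
    [IsProbabilityMeasure μ] (P : Bool → Set (Z × (Fin k → ℝ)))
    (hP : ∀ t, MeasurableSet (P t)) (h r : ℝ)
    (D : Finset (Fin n ⊕ Fin k)) (s : D → Bool) (z : Z) (q : ENNReal)
    (hq : ∀ u : Fin k → ℝ, ‖u‖ = r → μ {w | ∀ t, (z, w) ∈ P t → bsgn t * (w ⬝ᵥ u) ≤ h} ≤ q) :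
    (Measure.pi fun _ : Fin n => μ) {W | (z, W) ∈ Ev P h r D s} ≤
      (∏ x : D, Sum.elim (fun _ => μ {w | (z, w) ∈ P (s x)}) (fun _ => 1) x.1) *
        q ^ (n - D.toLeft.card) := by
  classical
  let A : Fin n → Set (Fin k → ℝ) := fun j =>
    if hj : Sum.inl j ∈ D then {w | (z, w) ∈ P (s ⟨_, hj⟩)} else Set.univ
  have hz : Measurable (fun W : Fin n → Fin k → ℝ => (z, W)) := by fun_prop
  have hz' : Measurable (fun W : Fin k → ℝ => (z, W)) := by fun_prop
  have hEq : {W | (z, W) ∈ Ev P h r D s} = {W : Fin n → Fin k → ℝ | (∀ j ∈ D.toLeft, W j ∈ A j) ∧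
      W ∈ {W : Fin n → Fin k → ℝ | ‖Uv h r D s W‖ = r} ∧
      ∀ j ∉ D.toLeft, W j ∈ {w | ∀ t, (z, w) ∈ P t → bsgn t * (w ⬝ᵥ Uv h r D s W) ≤ h}} := by
    ext W
    simp only [Ev, Set.mem_ofPred_eq, Finset.mem_toLeft]
    refine and_congr ?_ Iff.rfl
    refine forall_congr' fun j => forall_congr' fun hj => ?_
    simp [A, hj]
  have hcong : ∀ W W' : Fin n → Fin k → ℝ, (∀ j ∈ D.toLeft, W j = W' j) → Uv h r D s W = Uv h r D s W' :=
    fun W W' hW => Usol_congr D _ W W' fun j hj => hW j (Finset.mem_toLeft.2 hj)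
  have := fubini_box μ D.toLeft A (fun j => by
      by_cases hj : Sum.inl j ∈ D
      · simp only [A, hj, dite_true]; exact hz' (hP _)
      · simp only [A, hj, dite_false]; exact MeasurableSet.univ)
    {W : Fin n → Fin k → ℝ | ‖Uv h r D s W‖ = r}
    (fun W => {w | ∀ t, (z, w) ∈ P t → bsgn t * (w ⬝ᵥ Uv h r D s W) ≤ h}) q
    (fun W W' hW => by simp [hcong W W' hW]) (fun W W' hW => by simp [hcong W W' hW])
    (fun W hW => hq _ hW) (by rw [← hEq]; exact hz (Ev_meas P hP h r D s))
  rw [hEq]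
  refine this.trans (le_of_eq ?_)
  congr 1
  · let F : Fin n ⊕ Fin k → ENNReal := Sum.elim (fun j => μ (A j)) (fun _ => 1)
    have h1 : ∏ x : D, Sum.elim (fun _ => μ {w | (z, w) ∈ P (s x)}) (fun _ => 1) x.1 = ∏ x : D, F x := by
      refine Finset.prod_congr rfl fun x _ => ?_
      rcases x with ⟨x | x, hx⟩
      · simp [F, A, hx]
      · simp [F]
    rw [h1, Finset.prod_coe_sort D F]
    conv_rhs => rw [← Finset.toLeft_disjSum_toRight (u := D)]
    rw [Finset.prod_disjSum]
    simp [F]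
  · rw [Finset.card_compl, Fintype.card_fin]

lemma core {Z : Type} [MeasurableSpace Z] (n k : ℕ) (μ : Measure (Fin k → ℝ))
    [IsProbabilityMeasure μ] (P : Bool → Set (Z × (Fin k → ℝ)))
    (hP : ∀ t, MeasurableSet (P t)) (h r : ℝ) (hr : 0 < r) :
    ∃ S : Set (Z × (Fin n → Fin k → ℝ)), MeasurableSet S ∧
      (∀ (z : Z) (q : ENNReal), μ {w | (z, w) ∈ P true} + μ {w | (z, w) ∈ P false} ≤ 2 * q →
        (∀ u : Fin k → ℝ, ‖u‖ = r → μ {w | ∀ t, (z, w) ∈ P t → bsgn t * (w ⬝ᵥ u) ≤ h} ≤ q) →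
        (Measure.pi fun _ : Fin n => μ) {W | (z, W) ∈ S} ≤ (n + k).choose k * 2 ^ k * q ^ n) ∧
      ∀ z W (u : Fin k → ℝ), ‖u‖ = r → (∀ j t, (z, W j) ∈ P t → bsgn t * (W j ⬝ᵥ u) ≤ h) →
        (z, W) ∈ S := by
  classical
  refine ⟨⋃ D ∈ Finset.powersetCard k (Finset.univ : Finset (Fin n ⊕ Fin k)),
    ⋃ s : D → Bool, Ev P h r D s, ?_, ?_, ?_⟩
  · exact Finset.measurableSet_biUnion _ fun D _ => MeasurableSet.iUnion fun s => Ev_meas P hP h r D s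
  · intro z q hs hq
    have hD : ∀ D ∈ Finset.powersetCard k (Finset.univ : Finset (Fin n ⊕ Fin k)),
        (Measure.pi fun _ : Fin n => μ) {W | (z, W) ∈ ⋃ s : D → Bool, Ev P h r D s} ≤
          2 ^ k * q ^ n := by
      intro D hD
      have hDc : D.card = k := (Finset.mem_powersetCard.1 hD).2
      have h1 : {W | (z, W) ∈ ⋃ s : D → Bool, Ev P h r D s} =
          ⋃ s : D → Bool, {W | (z, W) ∈ Ev P h r D s} := by
        ext W; simp
      rw [h1]
      have hL : D.toLeft.card ≤ n := by simpa using Finset.card_le_univ D.toLeft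
      calc _ ≤ ∑ s : D → Bool, (Measure.pi fun _ : Fin n => μ) {W | (z, W) ∈ Ev P h r D s} :=
            measure_iUnion_fintype_le _ _
        _ ≤ ∑ s : D → Bool, (∏ x : D, Sum.elim (fun _ => μ {w | (z, w) ∈ P (s x)}) (fun _ => 1) x.1) *
        q ^ (n - D.toLeft.card) := Finset.sum_le_sum fun s _ => Ev_bound μ P hP h r D s z q hq
        _ = (∏ x : D, ∑ t : Bool, Sum.elim (fun _ => μ {w | (z, w) ∈ P t}) (fun _ => 1) x.1) *
            q ^ (n - D.toLeft.card) := by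
            rw [← Finset.sum_mul, Finset.prod_univ_sum, Fintype.piFinset_univ]
        _ ≤ (∏ x : D, Sum.elim (fun _ => 2 * q) (fun _ => 2) x.1) * q ^ (n - D.toLeft.card) := by
            gcongr with x
            rcases x with ⟨x | x, hx⟩
            · simpa using hs
            · simp
        _ = (2 * q) ^ D.toLeft.card * 2 ^ D.toRight.card * q ^ (n - D.toLeft.card) := by
            rw [Finset.prod_coe_sort D (Sum.elim (fun _ => 2 * q) (fun _ => 2))]
            conv_lhs => rw [← Finset.toLeft_disjSum_toRight (u := D)]
            rw [Finset.prod_disjSum]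
            simp
        _ = 2 ^ (D.toLeft.card + D.toRight.card) * q ^ (D.toLeft.card + (n - D.toLeft.card)) := by
            rw [mul_pow, pow_add, pow_add]; ring
        _ = _ := by
            rw [Finset.card_toLeft_add_card_toRight, hDc, Nat.add_sub_cancel' hL]
    have h2 : {W | (z, W) ∈ ⋃ D ∈ Finset.powersetCard k (Finset.univ : Finset (Fin n ⊕ Fin k)),
        ⋃ s : D → Bool, Ev P h r D s} = ⋃ D ∈ Finset.powersetCard k (Finset.univ : Finset (Fin n ⊕ Fin k)),
        {W | (z, W) ∈ ⋃ s : D → Bool, Ev P h r D s} := by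
      ext W; simp
    rw [h2]
    refine (measure_biUnion_finset_le _ _).trans ((Finset.sum_le_sum hD).trans (le_of_eq ?_))
    rw [Finset.sum_const, Finset.card_powersetCard, Finset.card_univ, Fintype.card_sum,
      Fintype.card_fin, Fintype.card_fin, nsmul_eq_mul, mul_assoc]
  · intro z W u0 hu0 hc
    let act : Fin n ⊕ Fin k → Bool → Prop := Sum.elim (fun j t => (z, W j) ∈ P t) (fun _ _ => True)
    have hbox : ∀ u : Fin k → ℝ, ‖u‖ ≤ r ↔ ∀ (i : Fin k) (t : Bool), bsgn t * u i ≤ r := by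
      intro u
      rw [pi_norm_le_iff_of_nonneg hr.le]
      refine forall_congr' fun i => ?_
      rw [Real.norm_eq_abs, abs_le]
      constructor
      · rintro ⟨h1, h2⟩ t
        cases t <;> simp [bsgn] <;> linarith
      · intro h1
        have a := h1 true
        have b := h1 false
        simp [bsgn] at a b
        constructor <;> linarith
    have hall : ∀ u : Fin k → ℝ, (∀ x t, act x t → bsgn t * (vecs W x ⬝ᵥ u) ≤ bvec h r x) ↔
        ((∀ j t, (z, W j) ∈ P t → bsgn t * (W j ⬝ᵥ u) ≤ h) ∧ ‖u‖ ≤ r) := by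
      intro u
      rw [hbox]
      simp [act, vecs, bvec]
    have hex : ∃ i t, bsgn t * u0 i = r := by
      have hk : (Finset.univ : Finset (Fin k)).Nonempty := by
        rw [Finset.univ_nonempty_iff]
        by_contra hne
        rw [not_nonempty_iff] at hne
        have : u0 = 0 := Subsingleton.elim _ _
        rw [this, norm_zero] at hu0
        linarith
      obtain ⟨i, _, hi⟩ := Finset.exists_mem_eq_sup _ hk (fun i => ‖u0 i‖₊)
      have h3 : |u0 i| = r := by
        rw [← hu0, Pi.norm_def, hi]; simp
      rcases abs_choice (u0 i) with h4 | h4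
      · exact ⟨i, true, by simp [bsgn]; linarith⟩
      · exact ⟨i, false, by simp [bsgn]; linarith⟩
    obtain ⟨i0, t0, hi0⟩ := hex
    obtain ⟨u, hu, hut, D, s, hDc, hDt, hinj⟩ := vertex_exists (vecs W) (bvec h r) act u0
      ((hall u0).2 ⟨hc, hu0.le⟩) r (fun u hu => ((hall u).1 hu).2) (Sum.inr i0) t0 trivial
      (by simpa [vecs, bvec] using hi0)
    have hur : ‖u‖ = r := by
      refine le_antisymm ((hall u).1 hu).2 ?_
      have h5 : bsgn t0 * u i0 = r := by simpa [vecs, bvec] using hut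
      have h6 := norm_le_pi_norm u i0
      rw [Real.norm_eq_abs] at h6
      have h7 : |bsgn t0 * u i0| = |u i0| := by cases t0 <;> simp [bsgn]
      rw [h5, abs_of_pos hr] at h7
      linarith
    have hU : Uv h r D (fun x => s x.1) W = u := by
      refine Usol_eq D _ W u (fun x => ?_) hinj
      have := (hDt x.1 x.2).2
      rw [← this, ← mul_assoc, bsgn_sq, one_mul]
    simp only [Set.mem_iUnion, Finset.mem_powersetCard]
    refine ⟨D, ⟨Finset.subset_univ _, hDc⟩, fun x => s x.1, ?_, ?_, ?_⟩
    · intro j hj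
      exact (hDt _ hj).1
    · simp only [hU, hur]
    · intro j hj t ht
      simp only [hU]
      exact ((hall u).1 hu).1 j t ht


lemma choose_bound (n k : ℕ) (h : 5 * k ≤ n) :
    ((n + k).choose k : ENNReal) * 2 ^ k * (ENNReal.ofReal 0.505) ^ n ≤ ENNReal.ofReal (0.985 ^ k) := by
  have h1 : ((n + k).choose k : ℝ) * (1/5) ^ k ≤ (6/5) ^ (n + k) := by
    have := add_pow (1/5 : ℝ) 1 (n + k)
    rw [show (1/5 + 1 : ℝ) = 6/5 by norm_num] at this
    rw [this]
    refine le_trans (le_of_eq ?_) (Finset.single_le_sum (f := fun m => (1/5 : ℝ) ^ m * 1 ^ (n + k - m) * ((n + k).choose m)) (fun i _ => by positivity)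
      (Finset.mem_range.2 (by omega : k < n + k + 1)))
    simp; ring
  have h2 : ((n + k).choose k : ℝ) ≤ 5 ^ k * (6/5) ^ (n + k) := by
    have h5 : (0:ℝ) < 5 ^ k := by positivity
    calc ((n + k).choose k : ℝ) = 5 ^ k * (((n + k).choose k : ℝ) * (1/5) ^ k) := by
          rw [one_div, inv_pow]; field_simp
      _ ≤ _ := by gcongr
  have h3 : ((n + k).choose k : ℝ) * 2 ^ k * 0.505 ^ n ≤ 0.985 ^ k := by
    obtain ⟨m, rfl⟩ := Nat.exists_eq_add_of_le h
    calc (((5 * k + m + k).choose k : ℕ) : ℝ) * 2 ^ k * 0.505 ^ (5 * k + m)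
        ≤ (5 ^ k * (6/5) ^ (5 * k + m + k)) * 2 ^ k * 0.505 ^ (5 * k + m) := by gcongr
      _ = (5 * (6/5) ^ 6 * 2 * 0.505 ^ 5) ^ k * (6/5 * 0.505) ^ m := by
          rw [show 5 * k + m + k = 6 * k + m by ring]
          simp only [mul_pow, pow_add, pow_mul]; ring
      _ ≤ 0.985 ^ k * 1 := by
          gcongr
          · norm_num
          · exact pow_le_one₀ (by norm_num) (by norm_num)
      _ = _ := by ring
  calc _ = ENNReal.ofReal (((n + k).choose k : ℝ) * 2 ^ k * 0.505 ^ n) := by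
        rw [ENNReal.ofReal_mul (by positivity), ENNReal.ofReal_mul (by positivity),
          ENNReal.ofReal_pow (by norm_num), ENNReal.ofReal_pow (by norm_num)]
        simp
    _ ≤ _ := ENNReal.ofReal_le_ofReal h3

lemma core2 {Z : Type} [MeasurableSpace Z] (n k : ℕ) (hnk : 5 * k ≤ n) (P : Bool → Set (Z × (Fin k → ℝ)))
    (hP : ∀ t, MeasurableSet (P t)) (h : ℝ) (hh : 0 ≤ h) :
    ∃ S : Set (Z × (Fin n → Fin k → ℝ)), MeasurableSet S ∧
      (∀ z : Z, gpi k {w | (z, w) ∈ P true} + gpi k {w | (z, w) ∈ P false} ≤ 2 * ENNReal.ofReal 0.505 →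
        (∀ u : Fin k → ℝ, u ≠ 0 → h ≤ 0.001 * ‖u‖ →
          gpi k {w | ∀ t, (z, w) ∈ P t → bsgn t * (w ⬝ᵥ u) ≤ h} ≤ ENNReal.ofReal 0.505) →
        stdGaussianMatrix n k {W | (z, W) ∈ S} ≤ ENNReal.ofReal (0.985 ^ k)) ∧
      ∀ z W (u : Fin k → ℝ), u ≠ 0 → h ≤ 0.001 * ‖u‖ →
        (∀ j t, (z, W j) ∈ P t → bsgn t * (W j ⬝ᵥ u) ≤ h) → (z, W) ∈ S := by
  obtain ⟨r, hr, hr1, hr2⟩ : ∃ r : ℝ, 0 < r ∧ h ≤ 0.001 * r ∧ (h = 0 ∨ r = h / 0.001) := by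
    rcases hh.eq_or_lt with h0 | h0
    · exact ⟨1, one_pos, by linarith, Or.inl h0.symm⟩
    · exact ⟨h / 0.001, by positivity, by field_simp; exact le_rfl, Or.inr rfl⟩
  obtain ⟨S, hS, hS1, hS2⟩ := core n k (gpi k) P hP h r hr
  refine ⟨S, hS, ?_, ?_⟩
  · intro z h1 h2
    refine le_trans (hS1 z _ h1 fun u hu => h2 u ?_ ?_) (choose_bound n k hnk)
    · rintro rfl; simp at hu; linarith
    · rw [hu]; exact hr1
  · intro z W u hu hu2 hc
    have hn : 0 < ‖u‖ := norm_pos_iff.2 hu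
    refine hS2 z W ((r / ‖u‖) • u) ?_ ?_
    · rw [norm_smul, Real.norm_eq_abs, abs_of_pos (by positivity)]; field_simp
    · intro j t ht
      have h1 := hc j t ht
      rw [dotProduct_smul, smul_eq_mul]
      have h2 : bsgn t * (r / ‖u‖ * (W j ⬝ᵥ u)) = (r / ‖u‖) * (bsgn t * (W j ⬝ᵥ u)) := by ring
      rw [h2]
      have h3 : (r / ‖u‖) * (bsgn t * (W j ⬝ᵥ u)) ≤ (r / ‖u‖) * h := by gcongr
      refine h3.trans ?_
      rcases hr2 with h0 | h0
      · simp [h0]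
      · have : r / ‖u‖ ≤ 1 := by
          rw [div_le_one hn, h0, div_le_iff₀ (by norm_num)]; linarith
        nlinarith

lemma norm_le_sigma {k : ℕ} (u : Fin k → ℝ) : ‖u‖ ≤ √(∑ j, u j ^ 2) := by
  rw [pi_norm_le_iff_of_nonneg (Real.sqrt_nonneg _)]
  intro i
  rw [Real.norm_eq_abs]
  apply Real.abs_le_sqrt
  exact Finset.single_le_sum (f := fun j => u j ^ 2) (fun j _ => sq_nonneg _) (Finset.mem_univ i)

lemma gpi_pos {k : ℕ} (z : Fin k → ℝ) (hz : 0 < √(∑ j, z j ^ 2)) :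
    gpi k {w | 0 < w ⬝ᵥ z} ≤ ENNReal.ofReal (1/2) := by
  have := gpi_apply k z (A := Set.Ioi 0) measurableSet_Ioi
  simp only [Set.mem_Ioi] at this
  rw [this]
  refine le_trans (measure_mono ?_) g_pos
  intro x hx
  exact pos_of_mul_pos_right hx hz.le

lemma gpi_le {k : ℕ} (z : Fin k → ℝ) (c t : ℝ) (ht : 0 ≤ t) (hz : 0 < √(∑ j, z j ^ 2))
    (hc : c ≤ t * √(∑ j, z j ^ 2)) :
    gpi k {w | w ⬝ᵥ z ≤ c} ≤ ENNReal.ofReal (1/2 + t) := by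
  have := gpi_apply k z (A := Set.Iic c) measurableSet_Iic
  simp only [Set.mem_Iic] at this
  rw [this]
  refine le_trans (measure_mono ?_) (g_le t ht)
  intro x (hx : _ ≤ c)
  show x ≤ t
  by_contra hlt
  push Not at hlt
  nlinarith

lemma gpi_abs {k : ℕ} (z : Fin k → ℝ) (c t : ℝ) (hz : 0 < √(∑ j, z j ^ 2))
    (hc : c ≤ t * √(∑ j, z j ^ 2)) :
    gpi k {w | |w ⬝ᵥ z| ≤ c} ≤ ENNReal.ofReal (2 * t) := by
  have := gpi_apply k z (A := {x | |x| ≤ c}) (measurableSet_le (by fun_prop) (by fun_prop))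
  simp only [Set.mem_ofPred_eq] at this
  rw [this]
  refine le_trans (measure_mono ?_) (g_abs t)
  intro x (hx : _ ≤ c)
  show |x| ≤ t
  rw [abs_mul, abs_of_pos hz] at hx
  by_contra hlt
  push Not at hlt
  nlinarith

lemma gpi_tail {k : ℕ} (z : Fin k → ℝ) (c : ℝ) (_ : 0 ≤ c) (hc : 20 * √(∑ j, z j ^ 2) ≤ c) :
    gpi k {w | w ⬝ᵥ z < -c} ≤ ENNReal.ofReal (1/400) := by
  have := gpi_apply k z (A := Set.Iio (-c)) measurableSet_Iio
  simp only [Set.mem_Iio] at this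
  rw [this]
  refine le_trans (measure_mono ?_) g_tail
  intro x (hx : _ < -c)
  show x < -20
  by_contra hlt
  push Not at hlt
  nlinarith [Real.sqrt_nonneg (∑ j, z j ^ 2)]

lemma layer (n k : ℕ) (hnk : 5 * k ≤ n) (δ : ℝ) (hδ : 0 ≤ δ) :
    ∃ S : Set ((Fin k → ℝ) × (Fin n → Fin k → ℝ)), MeasurableSet S ∧
      (∀ z, stdGaussianMatrix n k {W | (z, W) ∈ S} ≤ ENNReal.ofReal (0.985 ^ k)) ∧
      ∀ z W y x, (∀ j, |y j - relu ((Matrix.of W).mulVec z j)| ≤ δ) →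
        InfFeasible (Matrix.of W) y δ x → (z, W) ∉ S → ‖x - z‖ ≤ 20002000 * δ := by
  have hdm : Measurable (fun p : (Fin k → ℝ) × (Fin k → ℝ) => p.2 ⬝ᵥ p.1) := by
    unfold dotProduct; fun_prop
  obtain ⟨SA, hSA, hA1, hA2⟩ := core2 n k hnk (fun _ => {p : (Fin k → ℝ) × (Fin k → ℝ) | 2 * δ < p.2 ⬝ᵥ p.1})
    (fun _ => measurableSet_lt measurable_const hdm) (2 * δ) (by linarith)
  obtain ⟨SB, hSB, hB1, hB2⟩ := core2 n k hnk
    (fun t => if t then {p : (Fin k → ℝ) × (Fin k → ℝ) | -(20000 * δ) ≤ p.2 ⬝ᵥ p.1} else ∅)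
    (fun t => by
      cases t
      · simp
      · simpa using measurableSet_le measurable_const hdm) (20002 * δ) (by linarith)
  let C : Set ((Fin k → ℝ) × (Fin n → Fin k → ℝ)) :=
    {p | 2 * δ ≤ 0.002 * √(∑ j, p.1 j ^ 2) ∧ 0 < √(∑ j, p.1 j ^ 2)}
  have hσ : Measurable (fun p : (Fin k → ℝ) × (Fin n → Fin k → ℝ) => √(∑ j, p.1 j ^ 2)) := by
    fun_prop
  have hC : MeasurableSet C :=
    MeasurableSet.inter (measurableSet_le (f := fun _ => 2 * δ) measurable_const (hσ.const_mul 0.002))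
      (measurableSet_lt (f := fun _ => (0:ℝ)) measurable_const hσ)
  refine ⟨(SA ∩ C) ∪ (SB ∩ Cᶜ), (hSA.inter hC).union (hSB.inter hC.compl), ?_, ?_⟩
  · intro z
    by_cases hz : 2 * δ ≤ 0.002 * √(∑ j, z j ^ 2) ∧ 0 < √(∑ j, z j ^ 2)
    · refine (measure_mono (?_ : _ ⊆ {W | (z, W) ∈ SA})).trans (hA1 z ?_ ?_)
      · rintro W (⟨h, _⟩ | ⟨_, h⟩)
        · exact h
        · exact absurd hz h
      · have h1 : gpi k {w | 2 * δ < w ⬝ᵥ z} ≤ ENNReal.ofReal (1/2) :=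
          (measure_mono (fun w (hw : 2 * δ < w ⬝ᵥ z) => show 0 < w ⬝ᵥ z by linarith)).trans (gpi_pos z hz.2)
        have h2 : ENNReal.ofReal (1/2) ≤ ENNReal.ofReal 0.505 :=
          ENNReal.ofReal_le_ofReal (by norm_num)
        rw [two_mul (ENNReal.ofReal 0.505)]
        exact add_le_add (h1.trans h2) (h1.trans h2)
      · intro u hu hu2
        have hn : 0 < ‖u‖ := norm_pos_iff.2 hu
        have hs := norm_le_sigma u
        have hsub : {w : Fin k → ℝ | ∀ t, (z, w) ∈ {p : (Fin k → ℝ) × (Fin k → ℝ) | 2 * δ < p.2 ⬝ᵥ p.1} →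
            bsgn t * (w ⬝ᵥ u) ≤ 2 * δ} ⊆ {w | w ⬝ᵥ z ≤ 2 * δ} ∪ {w | |w ⬝ᵥ u| ≤ 2 * δ} := by
          intro w hw
          rcases le_or_gt (w ⬝ᵥ z) (2 * δ) with h | h
          · left; exact h
          · right
            have a := hw true h
            have b := hw false h
            simp only [bsgn, if_true, Bool.false_eq_true, if_false] at a b
            show |w ⬝ᵥ u| ≤ 2 * δ
            rw [abs_le]; constructor <;> linarith
        refine (measure_mono hsub).trans ((measure_union_le _ _).trans ?_)
        refine (add_le_add (gpi_le z (2 * δ) 0.002 (by norm_num) hz.2 hz.1)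
          (gpi_abs u (2 * δ) 0.001 (by linarith) (by nlinarith))).trans ?_
        rw [← ENNReal.ofReal_add (by norm_num) (by norm_num)]
        exact ENNReal.ofReal_le_ofReal (by norm_num)
    · have hz' : √(∑ j, z j ^ 2) ≤ 1000 * δ := by
        by_contra hlt
        push Not at hlt
        exact hz ⟨by nlinarith, by linarith⟩
      refine (measure_mono (?_ : _ ⊆ {W | (z, W) ∈ SB})).trans (hB1 z ?_ ?_)
      · rintro W (⟨_, h⟩ | ⟨h, _⟩)
        · exact absurd h hz
        · exact h
      · simp only [if_true, Bool.false_eq_true, if_false, Set.mem_empty_iff_false]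
        have h0 : gpi k {w : Fin k → ℝ | False} = 0 := by simp
        rw [h0, add_zero]
        refine prob_le_one.trans ?_
        rw [show (2 : ENNReal) = ENNReal.ofReal 2 by simp, ← ENNReal.ofReal_mul (by norm_num),
          ← ENNReal.ofReal_one]
        exact ENNReal.ofReal_le_ofReal (by norm_num)
      · intro u hu hu2
        have hn : 0 < ‖u‖ := norm_pos_iff.2 hu
        have hs := norm_le_sigma u
        refine (measure_mono (t := {w | w ⬝ᵥ z < -(20000 * δ)} ∪ {w | w ⬝ᵥ u ≤ 20002 * δ}) ?_).trans
          ((measure_union_le _ _).trans ?_)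
        · intro w hw
          rcases lt_or_ge (w ⬝ᵥ z) (-(20000 * δ)) with h | h
          · left; exact h
          · right
            have a := hw true (by simpa using h)
            simpa [bsgn] using a
        refine (add_le_add (gpi_tail z (20000 * δ) (by linarith) (by linarith))
          (gpi_le u (20002 * δ) 0.001 (by norm_num) (by linarith) (by nlinarith))).trans ?_
        rw [← ENNReal.ofReal_add (by norm_num) (by norm_num)]
        exact ENNReal.ofReal_le_ofReal (by norm_num)
  · intro z W y x hy hf hS
    by_contra hlt
    push Not at hlt
    have hu : x - z ≠ 0 := by
      intro h0
      rw [h0, norm_zero] at hlt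
      linarith
    have hmv : ∀ (v : Fin k → ℝ) j, (Matrix.of W).mulVec v j = W j ⬝ᵥ v := fun v j => rfl
    apply hS
    by_cases hz : (z, W) ∈ C
    · left
      refine ⟨hA2 z W (x - z) hu (by linarith) ?_, hz⟩
      intro j t (ht : 2 * δ < W j ⬝ᵥ z)
      have h1 := hy j
      have h2 := hf j
      rw [hmv] at h1 h2
      rw [relu, max_eq_left (by linarith), abs_le] at h1
      have h3 := h2.1 (by linarith)
      rw [abs_le] at h3
      rw [dotProduct_sub]
      cases t <;> simp only [bsgn, if_true, Bool.false_eq_true, if_false] <;> linarith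
    · right
      refine ⟨hB2 z W (x - z) hu (by linarith) ?_, hz⟩
      intro j t ht
      cases t
      · simp at ht
      · have ht' : -(20000 * δ) ≤ W j ⬝ᵥ z := by simpa using ht
        have h1 := hy j
        have h2 := hf j
        rw [hmv] at h1 h2
        rw [abs_le] at h1
        have h3 : W j ⬝ᵥ x ≤ y j + δ := by
          rcases le_or_gt (y j) δ with h | h
          · exact h2.2 h
          · have := h2.1 h
            rw [abs_le] at this; linarith
        have h4 : relu (W j ⬝ᵥ z) ≤ W j ⬝ᵥ z + 20000 * δ := max_le (by linarith) (by linarith)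
        rw [dotProduct_sub]
        simp only [bsgn, if_true]
        linarith


instance stdGaussianMatrix_prob (n k : ℕ) : IsProbabilityMeasure (stdGaussianMatrix n k) := by
  unfold stdGaussianMatrix; infer_instance

instance netGaussian_prob (d : ℕ) (n : ℕ → ℕ) : IsProbabilityMeasure (netGaussian d n) := by
  unfold netGaussian; infer_instance

lemma layerOut_congr (n : ℕ → ℕ) (W V : ∀ i : ℕ, Fin (n (i + 1)) → Fin (n i) → ℝ)
    (z : Fin (n 0) → ℝ) : ∀ i, (∀ j < i, W j = V j) → layerOut n W i z = layerOut n V i z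
  | 0, _ => rfl
  | i + 1, h => by
    funext a
    simp only [layerOut]
    rw [layerOut_congr n W V z i (fun j hj => h j (by omega)), h i (by omega)]

lemma extendW_measurable (d : ℕ) (n : ℕ → ℕ) (i : ℕ) :
    Measurable (fun W' : (∀ i : Fin d, Fin (n (i.1 + 1)) → Fin (n i.1) → ℝ) => extendW d n W' i) := by
  unfold extendW
  by_cases h : i < d
  · simp only [h, dif_pos]
    exact measurable_pi_apply (⟨i, h⟩ : Fin d)
  · simp only [h, dif_neg, not_false_eq_true]
    exact measurable_const

lemma layerOut_measurable (d : ℕ) (n : ℕ → ℕ) (z : Fin (n 0) → ℝ) : ∀ i,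
    Measurable (fun W' : (∀ i : Fin d, Fin (n (i.1 + 1)) → Fin (n i.1) → ℝ) =>
      layerOut n (extendW d n W') i z)
  | 0 => measurable_const
  | i + 1 => by
    have h1 := layerOut_measurable d n z i
    have h2 := extendW_measurable d n i
    refine measurable_pi_lambda _ fun a => ?_
    simp only [layerOut, relu, Matrix.mulVec, dotProduct, Matrix.of_apply]
    refine Measurable.max (Finset.measurable_sum _ fun b _ => ?_) measurable_const
    exact ((measurable_pi_apply b).comp ((measurable_pi_apply a).comp h2)).mul
      ((measurable_pi_apply b).comp h1)

lemma bad_bound (d : ℕ) (n : ℕ → ℕ) (z : Fin (n 0) → ℝ) (i : Fin d)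
    (S : Set ((Fin (n i.1) → ℝ) × (Fin (n (i.1 + 1)) → Fin (n i.1) → ℝ))) (hS : MeasurableSet S)
    (p : ENNReal) (h : ∀ y, stdGaussianMatrix (n (i.1 + 1)) (n i.1) {W | (y, W) ∈ S} ≤ p) :
    netGaussian d n {W' | (layerOut n (extendW d n W') i.1 z, W' i) ∈ S} ≤ p := by
  classical
  have hm : MeasurableSet {W' : (∀ i : Fin d, Fin (n (i.1 + 1)) → Fin (n i.1) → ℝ) |
      (layerOut n (extendW d n W') i.1 z, W' i) ∈ S} :=
    ((layerOut_measurable d n z i.1).prodMk (measurable_pi_apply i)) hS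
  rw [← lintegral_indicator_one hm]
  have hp : p = ∫⁻ _, p ∂(netGaussian d n) := by simp
  rw [hp]
  unfold netGaussian
  refine lintegral_le_of_lmarginal_le {i} (measurable_one.indicator hm) measurable_const ?_
  rw [lmarginal_singleton, lmarginal_singleton]
  intro W'
  have e1 : ∀ V, layerOut n (extendW d n (Function.update W' i V)) i.1 z =
      layerOut n (extendW d n W') i.1 z := by
    intro V
    apply layerOut_congr
    intro j hj
    have hjd : j < d := hj.trans i.2
    simp only [extendW, hjd, dif_pos]
    apply Function.update_of_ne
    intro h'
    rw [← h'] at hj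
    simp at hj
  have hm2 : MeasurableSet {V | (layerOut n (extendW d n W') i.1 z, V) ∈ S} :=
    (measurable_const.prodMk measurable_id) hS
  calc _ = ∫⁻ V, ({V | (layerOut n (extendW d n W') i.1 z, V) ∈ S}).indicator 1 V
          ∂(stdGaussianMatrix (n (i.1 + 1)) (n i.1)) := by
        refine lintegral_congr fun V => ?_
        simp only [Set.indicator, Set.mem_ofPred_eq, e1, Function.update_self]
        rfl
    _ ≤ p := by
        rw [lintegral_indicator_one hm2]; exact h _
    _ = _ := by simp

lemma n_ge (d : ℕ) (n : ℕ → ℕ) (hn : ∀ i < d, 5 * n i ≤ n (i + 1)) :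
    ∀ i < d, (i + 1) * n 0 ≤ n i
  | 0, _ => by simp
  | i + 1, h => by
    have := n_ge d n hn i (by omega)
    have h2 := hn i (by omega)
    nlinarith

lemma sum_bound (d : ℕ) (n : ℕ → ℕ) (hk : 0 < n 0) (hn : ∀ i < d, 5 * n i ≤ n (i + 1)) :
    ∑ i : Fin d, ENNReal.ofReal (0.985 ^ n i.1) ≤
      ENNReal.ofReal (100 * Real.exp (-(-Real.log 0.985) * (n 0 : ℝ))) := by
  rw [← ENNReal.ofReal_sum_of_nonneg (fun i _ => by positivity)]
  apply ENNReal.ofReal_le_ofReal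
  have he : Real.exp (-(-Real.log 0.985) * (n 0 : ℝ)) = 0.985 ^ n 0 := by
    rw [neg_neg, mul_comm, Real.exp_nat_mul, Real.exp_log (by norm_num)]
  rw [he]
  have h1 : ∀ i : Fin d, (0.985 : ℝ) ^ n i.1 ≤ 0.985 ^ n 0 * 0.985 ^ i.1 := by
    intro i
    rw [← pow_add]
    apply pow_le_pow_of_le_one (by norm_num) (by norm_num)
    have := n_ge d n hn i.1 i.2
    nlinarith
  refine (Finset.sum_le_sum fun i _ => h1 i).trans ?_
  rw [← Finset.mul_sum, Fin.sum_univ_eq_sum_range (fun i => (0.985 : ℝ) ^ i) d, mul_comm]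
  gcongr
  rw [geom_sum_eq (by norm_num)]
  have : (0:ℝ) ≤ 0.985 ^ d := by positivity
  rw [div_le_iff_of_neg (by norm_num)]
  generalize (0.985 : ℝ) ^ d = q at this ⊢
  norm_num
  linarith

lemma chain_exists (d : ℕ) (n : ℕ → ℕ) (W : ∀ i : ℕ, Fin (n (i + 1)) → Fin (n i) → ℝ)
    (z : Fin (n 0) → ℝ) (ε : ℝ) (e : Fin (n d) → ℝ) (he : ‖e‖ = ε) (A : ℝ) (hA : 0 ≤ A) :
    ∃ zh : ∀ j : ℕ, Fin (n j) → ℝ,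
      zh d = (fun j => layerOut n W d z j + e j) ∧
      ∀ i < d, InfFeasible (Matrix.of (W i)) (zh (i + 1)) (A ^ (d - (i + 1)) * ε) (zh i) := by
  have hε : 0 ≤ ε := he ▸ norm_nonneg e
  refine ⟨Function.update (fun j => layerOut n W j z) d (fun j => layerOut n W d z j + e j),
    by simp, ?_⟩
  intro i hi
  rw [Function.update_of_ne (by omega : i ≠ d)]
  set δ := A ^ (d - (i + 1)) * ε with hδ
  have hδ0 : 0 ≤ δ := by positivity
  have key : ∀ j, |Function.update (fun j => layerOut n W j z) d (fun j => layerOut n W d z j + e j) (i+1) j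
      - relu ((Matrix.of (W i)).mulVec (layerOut n W i z) j)| ≤ δ := by
    intro j
    by_cases h : i + 1 = d
    · subst h
      rw [Function.update_self]
      simp only [layerOut, add_sub_cancel_left]
      have := norm_le_pi_norm e j
      rw [he, Real.norm_eq_abs] at this
      simpa [hδ] using this
    · rw [Function.update_of_ne h]
      simpa [layerOut] using hδ0
  intro j
  have := key j
  revert this
  generalize Function.update (fun j => layerOut n W j z) d (fun j => layerOut n W d z j + e j) (i+1) j = y
  generalize (Matrix.of (W i)).mulVec (layerOut n W i z) j = t
  intro h
  rw [abs_le] at h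
  constructor
  · intro hy
    have ht : 0 < t := by
      by_contra hc
      rw [relu, max_eq_right (by linarith)] at h
      linarith
    rw [relu, max_eq_left ht.le] at h
    rw [abs_le]; constructor <;> linarith
  · intro _
    have : t ≤ relu t := le_max_left _ _
    linarith

/-- **Corollary: `ℓ∞` recovery for random Gaussian networks.**
There are absolute constants `c₂ ∈ (0,2]`, `c > 0`, `C > 0` such that for any depth
`d ≥ 1`, layer sizes `n 0 = k > 0` and `n (i+1) ≥ 5·n i`, independent i.i.d. standard
Gaussian weights, any `z* ∈ ℝ^k` and noise `e` with `‖e‖_∞ = ε` where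
`ε < (c₂^d/2^{d+4})·‖z*‖₂·√k`, with probability at least `1 − C·exp(−c·k)`: every
layer-wise feasibility chain `ẑ d = G(z*)+e, …, ẑ 0` (with tolerances
`ε_{i+1} = (2/c₂)^{d−(i+1)}·ε`) satisfies `‖ẑ 0 − z*‖_∞ ≤ (2/c₂)^d·ε`, and at least one
such chain exists. -/
theorem linf_recovery_random_gaussian_network :
    ∃ c₂ c C : ℝ, 0 < c₂ ∧ c₂ ≤ 2 ∧ 0 < c ∧ 0 < C ∧
      ∀ (d : ℕ), 1 ≤ d → ∀ (n : ℕ → ℕ) (k : ℕ), n 0 = k → 0 < k →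
        (∀ i < d, 5 * n i ≤ n (i + 1)) →
        ∀ (zstar : Fin (n 0) → ℝ) (ε : ℝ) (e : Fin (n d) → ℝ), ‖e‖ = ε →
          ε < c₂ ^ d / 2 ^ (d + 4) * Real.sqrt (∑ j, zstar j ^ 2) * Real.sqrt k →
          1 - ENNReal.ofReal (C * Real.exp (-c * (k : ℝ))) ≤
            netGaussian d n
              {W' |
                (∀ zh : ∀ j : ℕ, Fin (n j) → ℝ,
                    zh d = (fun j => layerOut n (extendW d n W') d zstar j + e j) →
                    (∀ i < d,
                      InfFeasible (Matrix.of (extendW d n W' i)) (zh (i + 1))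
                        ((2 / c₂) ^ (d - (i + 1)) * ε) (zh i)) →
                    ‖zh 0 - zstar‖ ≤ (2 / c₂) ^ d * ε) ∧
                (∃ zh : ∀ j : ℕ, Fin (n j) → ℝ,
                    zh d = (fun j => layerOut n (extendW d n W') d zstar j + e j) ∧
                    ∀ i < d,
                      InfFeasible (Matrix.of (extendW d n W' i)) (zh (i + 1))
                        ((2 / c₂) ^ (d - (i + 1)) * ε) (zh i))} := by
  refine ⟨1 / 10001000, -Real.log 0.985, 100, by norm_num, by norm_num, ?_, by norm_num, ?_⟩
  · exact neg_pos.2 (Real.log_neg (by norm_num) (by norm_num))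
  intro d _ n k hk0 hk hn zstar ε e he _
  have hε : 0 ≤ ε := he ▸ norm_nonneg e
  rw [show (2 / (1 / 10001000) : ℝ) = 20002000 by norm_num]
  subst hk0
  have hl := fun i : Fin d => layer (n (i.1 + 1)) (n i.1) (hn i.1 i.2)
    ((20002000 : ℝ) ^ (d - (i.1 + 1)) * ε) (by positivity)
  choose S hSm hSp hSd using hl
  have hbad : ∀ i : Fin d, netGaussian d n
      {W' | (layerOut n (extendW d n W') i.1 zstar, W' i) ∈ S i} ≤ ENNReal.ofReal (0.985 ^ n i.1) :=
    fun i => bad_bound d n zstar i (S i) (hSm i) _ (hSp i)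
  rw [tsub_le_iff_right]
  set G := {W' : (∀ i : Fin d, Fin (n (i.1 + 1)) → Fin (n i.1) → ℝ) |
                (∀ zh : ∀ j : ℕ, Fin (n j) → ℝ,
                    zh d = (fun j => layerOut n (extendW d n W') d zstar j + e j) →
                    (∀ i < d,
                      InfFeasible (Matrix.of (extendW d n W' i)) (zh (i + 1))
                        ((20002000 : ℝ) ^ (d - (i + 1)) * ε) (zh i)) →
                    ‖zh 0 - zstar‖ ≤ (20002000 : ℝ) ^ d * ε) ∧
                (∃ zh : ∀ j : ℕ, Fin (n j) → ℝ,
                    zh d = (fun j => layerOut n (extendW d n W') d zstar j + e j) ∧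
                    ∀ i < d,
                      InfFeasible (Matrix.of (extendW d n W' i)) (zh (i + 1))
                        ((20002000 : ℝ) ^ (d - (i + 1)) * ε) (zh i))} with hG
  have hsub : (Set.univ : Set (∀ i : Fin d, Fin (n (i.1 + 1)) → Fin (n i.1) → ℝ)) ⊆
      G ∪ ⋃ i : Fin d, {W' | (layerOut n (extendW d n W') i.1 zstar, W' i) ∈ S i} := by
    intro W' _
    by_cases hb : W' ∈ ⋃ i : Fin d, {W' | (layerOut n (extendW d n W') i.1 zstar, W' i) ∈ S i}
    · right; exact hb
    left
    have hb' : ∀ i : Fin d, (layerOut n (extendW d n W') i.1 zstar, W' i) ∉ S i := by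
      intro i hi
      exact hb (Set.mem_iUnion.2 ⟨i, hi⟩)
    refine ⟨?_, chain_exists d n (extendW d n W') zstar ε e he _ (by norm_num)⟩
    intro zh hzd hzf
    have main : ∀ m ≤ d, ‖zh (d - m) - layerOut n (extendW d n W') (d - m) zstar‖
        ≤ (20002000 : ℝ) ^ m * ε := by
      intro m
      induction m with
      | zero =>
        intro _
        have : zh d - layerOut n (extendW d n W') d zstar = e := by
          rw [hzd]; funext j; simp
        simp only [Nat.sub_zero, this, he]; simp
      | succ m ih =>
        intro hm
        have ih' := ih (by omega)
        obtain ⟨i, hi⟩ : ∃ i, d - (m + 1) = i := ⟨_, rfl⟩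
        have hi1 : d - m = i + 1 := by omega
        have hid : i < d := by omega
        have hmi : m = d - (i + 1) := by omega
        rw [hi]
        rw [hi1] at ih'
        have hW : extendW d n W' i = W' ⟨i, hid⟩ := by simp [extendW, hid]
        have hf := hzf i hid
        rw [← hmi, hW] at hf
        have hd := hSd ⟨i, hid⟩ (layerOut n (extendW d n W') i zstar) (W' ⟨i, hid⟩) (zh (i + 1)) (zh i)
        simp only [← hmi] at hd
        have := hd (fun j => ?_) hf (hb' ⟨i, hid⟩)
        · rw [pow_succ]; linarith
        · have := (norm_le_pi_norm _ j).trans ih'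
          rw [Real.norm_eq_abs] at this
          simpa [layerOut, hW] using this
    have := main d le_rfl
    rw [Nat.sub_self] at this
    exact this
  calc (1 : ENNReal) = netGaussian d n Set.univ := by simp
    _ ≤ _ := measure_mono hsub
    _ ≤ _ := measure_union_le _ _
    _ ≤ _ := by
      gcongr
      refine (measure_iUnion_fintype_le _ _).trans ?_
      exact (Finset.sum_le_sum fun i _ => hbad i).trans (sum_bound d n hk hn)
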